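/- Let X be a topological space and XI its Alexandroff Noodles. Then the composition map (f, g) ↦ f ∘ g from Hom_p(XI) × Hom_p(XI) to Hom_p(XI) is continuous. -/

import Mathlib

open Topology unitInterval

/-- The canonical projection sending `Sum.inl x` to `(x, 0)` and `Sum.inr p` to `p`;
its kernel is exactly the equivalence relation identifying each `x ∈ X` with `(x, 0)`. -/
def noodleProj (X : Type*) : X ⊕ (X × unitInterval) → X × unitInterval
  | Sum.inl x => (x, 0)
  | Sum.inr p => p

/-- The equivalence relation on `X ⊕ (X × [0,1])` identifying each `x ∈ X` with `(x, 0)`. -/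
def noodleSetoid (X : Type*) : Setoid (X ⊕ (X × unitInterval)) := Setoid.ker (noodleProj X)

/-- The Alexandroff Noodles of `X`: the quotient of the sum of `X` and `D × [0,1]`
(`D` the underlying set of `X`) identifying each `x ∈ X` with `(x, 0)`. -/
def Noodles (X : Type*) : Type _ := Quotient (noodleSetoid X)

/-- The topology of the sum of `X` and `D × [0,1]`, where `D` is the underlying set of `X`
with the discrete topology. -/
def noodleSumTop (X : Type*) [t : TopologicalSpace X] :
    TopologicalSpace (X ⊕ (X × unitInterval)) :=
  @instTopologicalSpaceSum X (X × unitInterval) t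
    (@instTopologicalSpaceProd X unitInterval ⊥ inferInstance)

/-- The Alexandroff Noodles carry the quotient topology. -/
instance noodlesTop (X : Type*) [TopologicalSpace X] : TopologicalSpace (Noodles X) :=
  (noodleSumTop X).coinduced (Quotient.mk (noodleSetoid X))

/-- The point `r_x` of the Alexandroff Noodles, for `x ∈ X` and `r ∈ [0,1]`
(so `0_x` is `noodlePt x 0`, the common image of `x` and `(x, 0)`). -/
def noodlePt {X : Type*} (x : X) (r : unitInterval) : Noodles X :=
  Quotient.mk (noodleSetoid X) (Sum.inr (x, r))

/-- The topology of pointwise convergence on the group of self-homeomorphisms of `X`,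
induced by the inclusion of `Hom(X)` into the product space `X → X`. -/
def homPTop (X : Type*) [TopologicalSpace X] : TopologicalSpace (X ≃ₜ X) :=
  TopologicalSpace.induced (fun f => (f : X → X)) inferInstance

/-!
Call a point an arc point if it has a neighbourhood inside a single noodle. A connected set through
two points of a noodle contains the segment between them. Combined with the retraction of the
Noodles onto the copy of `X` at height zero, this shows that a homeomorphism `f` sends at most one
point of each noodle to height zero, and hence that it preserves arc points.

If `g₀ p` is an arc point, take a small connected neighbourhood `V` of `f₀ (g₀ p)` and a segment
around `g₀ p` that `f₀` maps well inside `V`. Any `f` that maps the two endpoints of the segment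
into `V` maps the whole segment into `V`.

If `p = 0_x` is not an arc point, the open noodle `(0, 1]_x` is mapped by every homeomorphism into a
single noodle. For `g` close to `g₀` at `1_x`, the homeomorphism `g⁻¹ g₀` sends some point of
`(0, 1]_x` into `(0, 1]_x`, hence all of them. Letting the height tend to zero, `g⁻¹ (g₀ p)` lies in
the closure of `p`, so that every open set containing `f (g₀ p)` contains `f (g p)`.
-/

namespace Noodles

variable {X : Type*}

/-- The projection `r_x ↦ x` of the Alexandroff Noodles onto the underlying space. -/
def base : Noodles X → X :=
  Quotient.lift (fun a => (noodleProj X a).1) fun _ _ h => congrArg Prod.fst h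

/-- The height `r_x ↦ r` of a point above the copy of `X` at the bottom of its Noodles. -/
def height : Noodles X → I :=
  Quotient.lift (fun a => (noodleProj X a).2) fun _ _ h => congrArg Prod.snd h

/-- The retraction `r_x ↦ 0_x` of the Alexandroff Noodles onto the copy of `X` at height zero. -/
def ground (p : Noodles X) : Noodles X := noodlePt p.base 0

open Classical in
/-- The height along the noodle over `x`: the map sending `r_x` to `r` and collapsing all other
noodles to `0`. It is continuous for every topology on `X`, and so cuts out open segments of the
noodle. -/
noncomputable def heightOn (x : X) (p : Noodles X) : I := if p.base = x then p.height else 0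

@[simp]
theorem base_noodlePt (x : X) (r : I) : (noodlePt x r).base = x := rfl

@[simp]
theorem height_noodlePt (x : X) (r : I) : (noodlePt x r).height = r := rfl

theorem mk_inl (x : X) : Quotient.mk (noodleSetoid X) (Sum.inl x) = noodlePt x 0 :=
  Quotient.sound (s := noodleSetoid X) (rfl : noodleProj X (Sum.inl x) = (x, 0))

@[simp]
theorem noodlePt_base_height (p : Noodles X) : noodlePt p.base p.height = p := by
  induction p using Quotient.inductionOn with
  | h a =>
    cases a with
    | inl x => exact (mk_inl x).symm
    | inr q => rfl

theorem ground_eq_self {p : Noodles X} (hp : p.height = 0) : p.ground = p := by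
  rw [ground, ← hp, noodlePt_base_height]

theorem heightOn_noodlePt_self (x : X) (r : I) : heightOn x (noodlePt x r) = r := if_pos rfl

theorem heightOn_noodlePt_of_ne {x y : X} (h : y ≠ x) (r : I) : heightOn x (noodlePt y r) = 0 :=
  if_neg h

theorem heightOn_noodlePt_zero (x y : X) : heightOn x (noodlePt y 0) = 0 := ite_self 0

theorem base_eq_of_heightOn_pos {x : X} {p : Noodles X} (h : 0 < heightOn x p) : p.base = x := by
  by_contra hx
  exact h.ne' (if_neg hx)

theorem noodlePt_heightOn_of_pos {x : X} {p : Noodles X} (h : 0 < heightOn x p) :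
    noodlePt x (heightOn x p) = p := by
  obtain rfl := base_eq_of_heightOn_pos h
  rw [heightOn, if_pos rfl, noodlePt_base_height]

variable [TopologicalSpace X]

theorem continuous_iff {Y : Type*} [TopologicalSpace Y] {f : Noodles X → Y} :
    Continuous f ↔
      Continuous (fun x => f (noodlePt x 0)) ∧ ∀ x, Continuous fun r => f (noodlePt x r) := by
  have hprod := @continuous_prod_of_discrete_left X I Y ⊥ _ _ (discreteTopology_bot X)
    fun q => f (noodlePt q.1 q.2)
  have hsum := @continuous_sum_dom X (X × I) Y _ (@instTopologicalSpaceProd X I ⊥ _) _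
    (f ∘ Quotient.mk (noodleSetoid X))
  have hinl : (f ∘ Quotient.mk (noodleSetoid X)) ∘ Sum.inl = fun x => f (noodlePt x 0) :=
    funext fun x => congrArg f (mk_inl x)
  rw [hinl] at hsum
  exact continuous_coinduced_dom.trans (hsum.trans (and_congr_right' hprod))

theorem continuous_noodlePt_zero : Continuous fun x : X => noodlePt x 0 :=
  (continuous_iff.1 continuous_id).1

theorem continuous_noodlePt (x : X) : Continuous (noodlePt x) :=
  (continuous_iff.1 continuous_id).2 x

theorem continuous_base : Continuous (base : Noodles X → X) :=
  continuous_iff.2 ⟨continuous_id, fun _ => continuous_const⟩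

theorem continuous_height : Continuous (height : Noodles X → I) :=
  continuous_iff.2 ⟨continuous_const, fun _ => continuous_id⟩

theorem continuous_ground : Continuous (ground : Noodles X → Noodles X) :=
  continuous_noodlePt_zero.comp continuous_base

theorem continuous_heightOn (x : X) : Continuous (heightOn x) := by
  refine continuous_iff.2 ⟨?_, fun y => ?_⟩
  · simpa only [heightOn_noodlePt_zero] using continuous_const (X := X)
  · rcases eq_or_ne y x with rfl | hyx
    · simpa only [heightOn_noodlePt_self] using continuous_id' (X := I)
    · simpa only [heightOn_noodlePt_of_ne hyx] using continuous_const (X := I)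

theorem noodlePt_mem_closure_image_Ioi (x : X) (r : I) :
    noodlePt x r ∈ closure (noodlePt x '' Set.Ioi 0) := by
  refine image_closure_subset_closure_image (continuous_noodlePt x) (Set.mem_image_of_mem _ ?_)
  rw [closure_Ioi' ⟨1, Set.mem_Ioi.2 zero_lt_one⟩]
  exact unitInterval.nonneg r

theorem dense_setOf_height_pos : Dense {p : Noodles X | 0 < p.height} := by
  intro p
  rw [← noodlePt_base_height p]
  exact closure_mono (Set.image_subset_iff.2 fun _ hr => hr)
    (noodlePt_mem_closure_image_Ioi p.base p.height)

theorem image_noodlePt_Icc_subset {C : Set (Noodles X)} (hC : IsPreconnected C) {x : X} {r s : I}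
    (hr : noodlePt x r ∈ C) (hs : noodlePt x s ∈ C) : noodlePt x '' Set.Icc r s ⊆ C := by
  rintro _ ⟨t, ht, rfl⟩
  rcases ht.1.eq_or_lt with rfl | hrt
  · exact hr
  have hIcc : Set.Icc r s ⊆ heightOn x '' C :=
    (hC.image _ (continuous_heightOn x).continuousOn).Icc_subset
      ⟨_, hr, heightOn_noodlePt_self x r⟩ ⟨_, hs, heightOn_noodlePt_self x s⟩
  obtain ⟨p, hp, hpt⟩ := hIcc ht
  have hpos : 0 < heightOn x p := hpt ▸ (unitInterval.nonneg r).trans_lt hrt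
  rwa [← hpt, noodlePt_heightOn_of_pos hpos]

/-- Applying `ground` to the image of the segment gives a connected set through both endpoints,
so the image of the segment lies within it. -/
theorem height_apply_eq_zero_of_mem_Icc (f : Noodles X ≃ₜ Noodles X) {x : X} {r s t : I}
    (hr : (f (noodlePt x r)).height = 0) (hs : (f (noodlePt x s)).height = 0)
    (ht : t ∈ Set.Icc r s) : (f (noodlePt x t)).height = 0 := by
  set D : Set (Noodles X) := ground '' (f '' (noodlePt x '' Set.Icc r s))
  have hrs : r ≤ s := ht.1.trans ht.2
  have hD : IsPreconnected (f ⁻¹' D) := by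
    rw [f.isPreconnected_preimage]
    exact ((isPreconnected_Icc.image _ (continuous_noodlePt x).continuousOn).image _
      f.continuous.continuousOn).image _ continuous_ground.continuousOn
  have hrD : noodlePt x r ∈ f ⁻¹' D :=
    ⟨_, ⟨_, ⟨r, Set.left_mem_Icc.2 hrs, rfl⟩, rfl⟩, ground_eq_self hr⟩
  have hsD : noodlePt x s ∈ f ⁻¹' D :=
    ⟨_, ⟨_, ⟨s, Set.right_mem_Icc.2 hrs, rfl⟩, rfl⟩, ground_eq_self hs⟩
  obtain ⟨p, -, hp⟩ := image_noodlePt_Icc_subset hD hrD hsD ⟨t, ht, rfl⟩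
  rw [← hp, ground, height_noodlePt]

theorem eq_of_height_apply_eq_zero (f : Noodles X ≃ₜ Noodles X) {x : X} {r s : I}
    (hr : (f (noodlePt x r)).height = 0) (hs : (f (noodlePt x s)).height = 0) : r = s := by
  wlog hrs : r < s generalizing r s
  · rcases (not_lt.1 hrs).eq_or_lt with hsr | hsr
    · exact hsr.symm
    · exact (this hs hr hsr).symm
  obtain ⟨m, hrm, hms⟩ := exists_between hrs
  have hopen : IsOpen (f '' (heightOn x ⁻¹' Set.Ioo r s)) :=
    f.isOpenMap _ (isOpen_Ioo.preimage (continuous_heightOn x))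
  have hm : noodlePt x m ∈ heightOn x ⁻¹' Set.Ioo r s := by
    rw [Set.mem_preimage, heightOn_noodlePt_self]
    exact ⟨hrm, hms⟩
  obtain ⟨_, ⟨p, hp, rfl⟩, hfp⟩ :=
    dense_setOf_height_pos.inter_open_nonempty _ hopen ⟨_, noodlePt x m, hm, rfl⟩
  have hpx := noodlePt_heightOn_of_pos ((unitInterval.nonneg r).trans_lt hp.1)
  have hzero := height_apply_eq_zero_of_mem_Icc f hr hs (Set.Ioo_subset_Icc_self hp)
  rw [hpx] at hzero
  exact absurd hzero hfp.ne'

/-- A point of the Alexandroff Noodles near which there is only one noodle, i.e. at which `base` is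
locally constant. These are the points `r_x` with `0 < r` or with `x` isolated in `X`. -/
def IsArcPoint (p : Noodles X) : Prop := ∀ᶠ q in 𝓝 p, q.base = p.base

theorem isArcPoint_of_height_pos {p : Noodles X} (hp : 0 < p.height) : IsArcPoint p := by
  have hpos : 0 < heightOn p.base p := by rwa [heightOn, if_pos rfl]
  filter_upwards [(continuous_heightOn p.base).continuousAt.eventually_const_lt hpos]
    with q hq using base_eq_of_heightOn_pos hq

namespace IsArcPoint

theorem map {p : Noodles X} (hp : IsArcPoint p) (f : Noodles X ≃ₜ Noodles X) :
    IsArcPoint (f p) := by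
  by_cases hzero : (f p).height = 0
  swap
  · exact isArcPoint_of_height_pos (unitInterval.pos_iff_ne_zero.2 hzero)
  have hlim : Filter.Tendsto (fun y => f.symm (noodlePt y 0)) (𝓝 (f p).base) (𝓝 p) := by
    have hground : f.symm (f p).ground = p := f.symm_apply_eq.2 (ground_eq_self hzero)
    conv_rhs => rw [← hground]
    exact (f.symm.continuous.comp continuous_noodlePt_zero).tendsto (f p).base
  have hisolated : ∀ᶠ y in 𝓝 (f p).base, y = (f p).base := by
    filter_upwards [hlim.eventually hp] with y hy
    have hheight : (f.symm (noodlePt y 0)).height = p.height := by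
      refine eq_of_height_apply_eq_zero f (x := p.base) ?_ ?_
      · rw [← hy, noodlePt_base_height, f.apply_symm_apply, height_noodlePt]
      · rw [noodlePt_base_height, hzero]
    have hyp : f.symm (noodlePt y 0) = p := by
      rw [← noodlePt_base_height (f.symm _), hy, hheight, noodlePt_base_height]
    rw [← hyp, f.apply_symm_apply, base_noodlePt]
  exact (continuous_base.tendsto (f p)).eventually hisolated

theorem nhds_eq {p : Noodles X} (hp : IsArcPoint p) :
    𝓝 p = Filter.map (noodlePt p.base) (𝓝 p.height) := by
  apply le_antisymm
  · calc
      𝓝 p = Filter.map (noodlePt p.base ∘ height) (𝓝 p) := by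
        conv_lhs => rw [← Filter.map_id (f := 𝓝 p)]
        refine Filter.map_congr (hp.mono fun q hq => ?_)
        rw [Function.comp_apply, ← hq, noodlePt_base_height, id]
      _ ≤ Filter.map (noodlePt p.base) (𝓝 p.height) :=
        Filter.map_mono (continuous_height.tendsto p)
  · conv_rhs => rw [← noodlePt_base_height p]
    exact (continuous_noodlePt p.base).tendsto p.height

theorem exists_image_Icc_mem_nhds {p : Noodles X} (hp : IsArcPoint p) {U : Set (Noodles X)}
    (hU : U ∈ 𝓝 p) :
    ∃ c d, c ≤ d ∧ noodlePt p.base '' Set.Icc c d ∈ 𝓝 p ∧ noodlePt p.base '' Set.Icc c d ⊆ U := by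
  rw [hp.nhds_eq] at hU ⊢
  obtain ⟨c, d, hmem, hnhds, hsub⟩ := exists_Icc_mem_subset_of_mem_nhds (Filter.mem_map.1 hU)
  exact ⟨c, d, hmem.1.trans hmem.2, Filter.image_mem_map hnhds, Set.image_subset_iff.2 hsub⟩

end IsArcPoint

theorem base_eq_of_isPreconnected {C : Set (Noodles X)} (hC : IsPreconnected C)
    (harc : ∀ p ∈ C, IsArcPoint p) {p q : Noodles X} (hp : p ∈ C) (hq : q ∈ C) :
    p.base = q.base := by
  exact hC.induction₂ (fun p q => p.base = q.base)
    (fun a ha => ((harc a ha).filter_mono nhdsWithin_le_nhds).mono fun _ => Eq.symm)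
    (fun _ _ _ _ _ _ => Eq.trans) (fun _ _ _ _ => Eq.symm) hp hq

theorem base_apply_eq_of_pos (f : Noodles X ≃ₜ Noodles X) {x : X} {r s : I} (hr : 0 < r)
    (hs : 0 < s) : (f (noodlePt x r)).base = (f (noodlePt x s)).base := by
  have hpre : IsPreconnected (f '' (noodlePt x '' Set.Ioi 0)) :=
    (isPreconnected_Ioi.image _ (continuous_noodlePt x).continuousOn).image _
      f.continuous.continuousOn
  refine base_eq_of_isPreconnected hpre ?_ ⟨_, ⟨r, hr, rfl⟩, rfl⟩ ⟨_, ⟨s, hs, rfl⟩, rfl⟩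
  rintro _ ⟨_, ⟨t, ht, rfl⟩, rfl⟩
  exact (isArcPoint_of_height_pos (p := noodlePt x t) ht).map f

theorem height_apply_eq_zero_of_not_isArcPoint {p : Noodles X} (hp : ¬ IsArcPoint p)
    (f : Noodles X ≃ₜ Noodles X) : (f p).height = 0 := by
  by_contra hne
  have harc := (isArcPoint_of_height_pos (unitInterval.pos_iff_ne_zero.2 hne)).map f.symm
  exact hp (by rwa [f.symm_apply_apply] at harc)

theorem specializes_apply_of_not_isArcPoint {p : Noodles X} (hp : ¬ IsArcPoint p)
    (f : Noodles X ≃ₜ Noodles X) {r : I} (hr : 0 < r)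
    (hbase : (f (noodlePt p.base r)).base = p.base) : p ⤳ f p := by
  have hp0 : p.ground = p :=
    ground_eq_self (height_apply_eq_zero_of_not_isArcPoint hp (Homeomorph.refl _))
  have hfp0 : (f p).ground = f p := ground_eq_self (height_apply_eq_zero_of_not_isArcPoint hp f)
  have hmaps : Set.MapsTo (ground ∘ f) (noodlePt p.base '' Set.Ioi 0) {p} := by
    rintro _ ⟨s, hs, rfl⟩
    rw [Function.comp_apply, ground, base_apply_eq_of_pos f hs hr, hbase]
    exact hp0
  have hclosure : p ∈ closure (noodlePt p.base '' Set.Ioi 0) := by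
    simpa only [noodlePt_base_height] using noodlePt_mem_closure_image_Ioi p.base p.height
  have hcont : Continuous (ground ∘ f) := continuous_ground.comp f.continuous
  rw [specializes_iff_mem_closure, ← hfp0]
  exact map_mem_closure (f := ground ∘ f) hcont hclosure hmaps

end Noodles

section PointwiseConvergence

attribute [local instance] homPTop

theorem continuous_homeomorph_eval_const {Y : Type*} [TopologicalSpace Y] (y : Y) :
    Continuous fun f : Y ≃ₜ Y => f y :=
  (continuous_apply y).comp continuous_induced_dom

namespace Noodles

variable {X : Type*} [TopologicalSpace X]

theorem IsArcPoint.continuousAt_eval {p : Noodles X} (hp : IsArcPoint p)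
    (f₀ : Noodles X ≃ₜ Noodles X) :
    ContinuousAt (fun fq : (Noodles X ≃ₜ Noodles X) × Noodles X => fq.1 fq.2) (f₀, p) := by
  intro W hW
  obtain ⟨a, b, -, hA, hAW⟩ :=
    hp.exists_image_Icc_mem_nhds (f₀.continuous.continuousAt.preimage_mem_nhds hW)
  set A := noodlePt p.base '' Set.Icc a b
  obtain ⟨c, d, hcd, hS, hSA⟩ := hp.exists_image_Icc_mem_nhds (interior_mem_nhds.2 hA)
  have hpre : IsPreconnected (f₀ '' A) :=
    (isPreconnected_Icc.image _ (continuous_noodlePt _).continuousOn).image _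
      f₀.continuous.continuousOn
  have heval : ∀ t ∈ Set.Icc c d, ∀ᶠ f in 𝓝 f₀, f (noodlePt p.base t) ∈ f₀ '' A := fun t ht =>
    (continuous_homeomorph_eval_const (noodlePt p.base t)).continuousAt.eventually_mem <|
      f₀.isOpenMap.image_mem_nhds (mem_interior_iff_mem_nhds.1 (hSA ⟨t, ht, rfl⟩))
  have hends := (heval c (Set.left_mem_Icc.2 hcd)).and (heval d (Set.right_mem_Icc.2 hcd))
  rw [Filter.mem_map, nhds_prod_eq]
  filter_upwards [hends.prod_mk hS] with ⟨f, q⟩ ⟨⟨hc, hd⟩, hq⟩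
  have hfq : q ∈ f ⁻¹' (f₀ '' A) :=
    image_noodlePt_Icc_subset (f.isPreconnected_preimage.2 hpre) hc hd hq
  exact Set.image_subset_iff.2 hAW hfq

theorem eventually_specializes_of_not_isArcPoint {p : Noodles X} (hp : ¬ IsArcPoint p)
    (g₀ : Noodles X ≃ₜ Noodles X) : ∀ᶠ g in 𝓝 g₀, g p ⤳ g₀ p := by
  have hlim : Filter.Tendsto (fun g : Noodles X ≃ₜ Noodles X =>
      heightOn p.base (g₀.symm (g (noodlePt p.base 1)))) (𝓝 g₀) (𝓝 1) := by
    simpa only [Function.comp_def, g₀.symm_apply_apply, heightOn_noodlePt_self] using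
      (((continuous_heightOn p.base).comp g₀.symm.continuous).comp
        (continuous_homeomorph_eval_const (noodlePt p.base 1))).tendsto g₀
  filter_upwards [hlim.eventually_const_lt zero_lt_one] with g hg
  have hbase : ((g₀.trans g.symm) (noodlePt p.base
      (heightOn p.base (g₀.symm (g (noodlePt p.base 1)))))).base = p.base := by
    rw [noodlePt_heightOn_of_pos hg, Homeomorph.trans_apply, g₀.apply_symm_apply,
      g.symm_apply_apply, base_noodlePt]
  simpa only [Homeomorph.trans_apply, g.apply_symm_apply] using
    (specializes_apply_of_not_isArcPoint hp (g₀.trans g.symm) hg hbase).map g.continuous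

theorem continuous_comp_apply (p : Noodles X) :
    Continuous fun fg : (Noodles X ≃ₜ Noodles X) × (Noodles X ≃ₜ Noodles X) => fg.1 (fg.2 p) := by
  refine continuous_iff_continuousAt.2 fun ⟨f₀, g₀⟩ => ?_
  by_cases hp : IsArcPoint p
  · exact ContinuousAt.comp (x := (f₀, g₀)) ((hp.map g₀).continuousAt_eval f₀)
      (continuous_fst.prodMk
        ((continuous_homeomorph_eval_const p).comp continuous_snd)).continuousAt
  · refine tendsto_nhds.2 fun W hW hW₀ => ?_
    have heval : ∀ᶠ f in 𝓝 f₀, f (g₀ p) ∈ W :=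
      (continuous_homeomorph_eval_const (g₀ p)).continuousAt.eventually_mem (hW.mem_nhds hW₀)
    rw [nhds_prod_eq]
    filter_upwards [heval.prod_mk (eventually_specializes_of_not_isArcPoint hp g₀)]
      with ⟨f, g⟩ ⟨hf, hg⟩ using (hg.map f.continuous).mem_open hW hf

end Noodles

end PointwiseConvergence

/-- For any topological space `X`, composition `(f, g) ↦ f ∘ g` is continuous from
`Hom_p(XI) × Hom_p(XI)` to `Hom_p(XI)`, where `XI` is the Alexandroff Noodles of `X`. -/
theorem noodles_composition_continuous (X : Type*) [TopologicalSpace X] :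
    Continuous[@instTopologicalSpaceProd _ _ (homPTop (Noodles X)) (homPTop (Noodles X)),
        homPTop (Noodles X)]
      (fun p : (Noodles X ≃ₜ Noodles X) × (Noodles X ≃ₜ Noodles X) => p.2.trans p.1) := by
  let _ := homPTop (Noodles X)
  exact continuous_induced_rng.2 (continuous_pi Noodles.continuous_comp_apply)
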